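/- arXiv:0808.1822 — 2 statements merged into one kernel-verified Lean document; each statement's English description precedes it below -/
import Mathlib

section
/- For every n ≥ 2 and every t ≥ 0, the function Ω_n(t) = Γ(n/2)(2/t)^{(n-2)/2} J_{(n-2)/2}(t) (with Ω_n(0)=1) satisfies Ω_n(t) ≥ -1/2. -/
open MeasureTheory Filter Real

noncomputable def besselJ (α : ℝ) (t : ℝ) : ℝ :=
  ∑' k : ℕ, ((-1 : ℝ) ^ k / (k.factorial * Real.Gamma (k + α + 1))) * (t / 2) ^ (2 * (k : ℝ) + α)

noncomputable def Omega (n : ℕ) (t : ℝ) : ℝ :=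
  if t = 0 then 1
  else Real.Gamma (n / 2 : ℝ) * (2 / t) ^ (((n : ℝ) - 2) / 2) * besselJ (((n : ℝ) - 2) / 2) t

noncomputable def upperDensity {n : ℕ} (A : Set (EuclideanSpace ℝ (Fin n))) : ℝ :=
  Filter.limsup
    (fun T : ℝ => (volume (A ∩ {x | ∀ i, |x i| ≤ T})).toReal / (2 * T) ^ n)
    Filter.atTop

def AvoidsDistance {n : ℕ} (A : Set (EuclideanSpace ℝ (Fin n))) (d : ℝ) : Prop :=
  ∀ x ∈ A, ∀ y ∈ A, dist x y ≠ d

/-!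
For real order `α`, let `Λ α t = Γ(α + 1) (2 / t) ^ α J_α(t)`, so that `Ω_n = Λ ((n - 2) / 2)`.
Sonine's first integral expresses `Λ (μ + ν) t` as the mean of `Λ μ (t √u)` when `u` has the
`Beta (μ + 1, ν)` distribution, so a lower bound for `Λ 0 = J_0` holds for every order `α ≥ 0`.
By Bessel's integral, `J_0(t)` is the mean of `cos (t sin θ)` over `θ`. Averaging also over the
rotations by `0`, `2π / 3` and `4π / 3`, whose sines sum to zero, reduces the claim to
`cos a + cos b + cos c ≥ -3 / 2` for `a + b + c = 0`.
-/

lemma integrable_of_hasSum_of_norm_le {X E ι : Type*} [MeasurableSpace X] {m : Measure X}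
    [IsFiniteMeasure m] [NormedAddCommGroup E] [Countable ι]
    {F : ι → X → E} {g : X → E} {b : ι → ℝ} (hF : ∀ i, AEStronglyMeasurable (F i) m)
    (hFb : ∀ i, ∀ᵐ x ∂m, ‖F i x‖ ≤ b i) (hb : Summable b)
    (hg : ∀ᵐ x ∂m, HasSum (F · x) (g x)) : Integrable g m := by
  refine .of_bound ?_ (∑' i, b i) ?_
  · exact aestronglyMeasurable_of_tendsto_ae atTop
      (fun s => s.aestronglyMeasurable_fun_sum fun i _ => hF i) hg
  · filter_upwards [ae_all_iff.2 hFb, hg] with x hx hgx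
    exact hgx.norm_le_of_bounded hb.hasSum hx

section BetaMeasure

open ProbabilityTheory

lemma measurable_betaPDF (a b : ℝ) : Measurable (betaPDF a b) :=
  (measurable_betaPDFReal a b).ennreal_ofReal

lemma ae_mem_Ioo_betaMeasure (a b : ℝ) : ∀ᵐ u ∂betaMeasure a b, u ∈ Set.Ioo (0 : ℝ) 1 := by
  rw [betaMeasure, ae_withDensity_iff (measurable_betaPDF a b)]
  refine .of_forall fun u hu => ⟨?_, ?_⟩
  · exact not_le.1 fun h => hu (betaPDF_eq_zero_of_nonpos h)
  · exact not_le.1 fun h => hu (betaPDF_eq_zero_of_one_le h)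

lemma integral_betaMeasure {E : Type*} [NormedAddCommGroup E] [NormedSpace ℝ E]
    {a b : ℝ} (ha : 0 < a) (hb : 0 < b) (f : ℝ → E) :
    ∫ u, f u ∂betaMeasure a b = ∫ u, betaPDFReal a b u • f u := by
  have hnonneg (u : ℝ) : 0 ≤ betaPDFReal a b u := by
    by_cases hu : 0 < u ∧ u < 1
    · exact (betaPDFReal_pos hu.1 hu.2 ha hb).le
    · rw [betaPDFReal, if_neg hu]
  rw [betaMeasure, integral_withDensity_eq_integral_toReal_smul
    (measurable_betaPDF a b) (.of_forall fun u => ENNReal.ofReal_lt_top)]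
  simp only [betaPDF, ENNReal.toReal_ofReal (hnonneg _)]

lemma betaPDFReal_mul_pow {a b : ℝ} (ha : 0 < a) (hb : 0 < b) (k : ℕ) (u : ℝ) :
    betaPDFReal a b u * u ^ k = beta (a + k) b / beta a b * betaPDFReal (a + k) b u := by
  by_cases hu : 0 < u ∧ u < 1
  · have hbeta := beta_pos ha hb
    have hbeta' := beta_pos (add_pos_of_pos_of_nonneg ha k.cast_nonneg) hb
    rw [betaPDFReal, betaPDFReal, if_pos hu, if_pos hu, add_sub_right_comm,
      Real.rpow_add hu.1, Real.rpow_natCast]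
    field_simp
  · rw [betaPDFReal, betaPDFReal, if_neg hu, if_neg hu, zero_mul, mul_zero]

lemma integral_pow_betaMeasure {a b : ℝ} (ha : 0 < a) (hb : 0 < b) (k : ℕ) :
    ∫ u, u ^ k ∂betaMeasure a b = beta (a + k) b / beta a b := by
  have hak : 0 < a + k := by positivity
  have := isProbabilityMeasureBeta hak hb
  have htotal : ∫ u, betaPDFReal (a + k) b u = 1 := by
    simpa using (integral_betaMeasure hak hb fun _ => (1 : ℝ)).symm
  simp only [integral_betaMeasure ha hb, smul_eq_mul, betaPDFReal_mul_pow ha hb,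
    integral_const_mul, htotal, mul_one]

end BetaMeasure

/-- The Bessel function of the first kind of order `α` normalized to take the value `1` at `0`;
`Omega n` is the case `α = (n - 2) / 2`. Only `0 ≤ t` is meaningful, as `t ^ α` is a junk value
for `t < 0`. -/
noncomputable def normalizedBesselJ (α t : ℝ) : ℝ :=
  if t = 0 then 1 else Real.Gamma (α + 1) * (2 / t) ^ α * besselJ α t

/-- The coefficient of `(t / 2) ^ (2 * k)` in the Maclaurin series of `normalizedBesselJ α`. -/
noncomputable def normalizedBesselCoeff (α : ℝ) (k : ℕ) : ℝ :=
  (-1) ^ k * Real.Gamma (α + 1) / (k.factorial * Real.Gamma (k + α + 1))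

lemma Omega_eq_normalizedBesselJ (n : ℕ) (t : ℝ) :
    Omega n t = normalizedBesselJ (((n : ℝ) - 2) / 2) t := by
  rw [Omega, normalizedBesselJ, show ((n : ℝ) - 2) / 2 + 1 = n / 2 by ring]

section Series

variable {α : ℝ}

lemma normalizedBesselCoeff_zero_right (hα : -1 < α) : normalizedBesselCoeff α 0 = 1 := by
  have hΓ := Real.Gamma_pos_of_pos (neg_lt_iff_pos_add.1 hα)
  simp [normalizedBesselCoeff, hΓ.ne']

lemma normalizedBesselCoeff_succ (hα : -1 < α) (k : ℕ) :
    normalizedBesselCoeff α (k + 1) =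
      -normalizedBesselCoeff α k / ((k + 1) * (k + α + 1)) := by
  have hk : (0 : ℝ) < k + α + 1 := by linarith [k.cast_nonneg (α := ℝ)]
  have hΓ := (Real.Gamma_pos_of_pos hk).ne'
  rw [normalizedBesselCoeff, normalizedBesselCoeff, Nat.factorial_succ, Nat.cast_mul,
    Nat.cast_succ, add_right_comm (k : ℝ) 1 α, Real.Gamma_add_one hk.ne']
  field_simp [hΓ]
  ring

lemma abs_normalizedBesselCoeff_le (hα : -1 < α) (k : ℕ) :
    |normalizedBesselCoeff α k| ≤ (α + 1)⁻¹ ^ k / k.factorial := by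
  have hα' : 0 < α + 1 := neg_lt_iff_pos_add.1 hα
  induction k with
  | zero => simp [normalizedBesselCoeff_zero_right hα]
  | succ k ih =>
    have hle : α + 1 ≤ k + α + 1 := by linarith [k.cast_nonneg (α := ℝ)]
    have hk : 0 < k + α + 1 := hα'.trans_le hle
    rw [normalizedBesselCoeff_succ hα, abs_div, abs_neg,
      abs_of_pos (show 0 < ((k : ℝ) + 1) * (k + α + 1) by positivity)]
    calc |normalizedBesselCoeff α k| / ((k + 1) * (k + α + 1))
        ≤ ((α + 1)⁻¹ ^ k / k.factorial) / ((k + 1) * (α + 1)) := by gcongr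
      _ = (α + 1)⁻¹ ^ (k + 1) / (k + 1).factorial := by
        rw [Nat.factorial_succ, Nat.cast_mul, Nat.cast_succ, pow_succ]
        field_simp

lemma summable_norm_normalizedBesselJ_term (hα : -1 < α) (t : ℝ) :
    Summable fun k => ‖normalizedBesselCoeff α k * (t / 2) ^ (2 * k)‖ := by
  refine .of_nonneg_of_le (fun k => norm_nonneg _) (fun k => ?_)
    (Real.summable_pow_div_factorial ((α + 1)⁻¹ * (t / 2) ^ 2))
  rw [norm_mul, pow_mul, Real.norm_of_nonneg (show 0 ≤ ((t / 2) ^ 2) ^ k by positivity)]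
  calc |normalizedBesselCoeff α k| * ((t / 2) ^ 2) ^ k
      ≤ (α + 1)⁻¹ ^ k / k.factorial * ((t / 2) ^ 2) ^ k := by
        gcongr; exact abs_normalizedBesselCoeff_le hα k
    _ = ((α + 1)⁻¹ * (t / 2) ^ 2) ^ k / k.factorial := by rw [mul_pow]; ring

lemma normalizedBesselJ_eq_tsum_of_pos (α : ℝ) {t : ℝ} (ht : 0 < t) :
    normalizedBesselJ α t = ∑' k, normalizedBesselCoeff α k * (t / 2) ^ (2 * k) := by
  have hpow : (2 / t) ^ α * (t / 2) ^ α = 1 := by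
    rw [← Real.mul_rpow (by positivity) (by positivity), div_mul_div_cancel₀ ht.ne',
      div_self two_ne_zero, Real.one_rpow]
  rw [normalizedBesselJ, if_neg ht.ne', besselJ, ← tsum_mul_left]
  refine tsum_congr fun k => ?_
  have hsplit : (t / 2) ^ (2 * (k : ℝ) + α) = (t / 2) ^ (2 * k) * (t / 2) ^ α := by
    rw [Real.rpow_add (by positivity), ← Real.rpow_natCast]
    push_cast
    rfl
  rw [hsplit, normalizedBesselCoeff]
  linear_combination (-1) ^ k * Real.Gamma (α + 1) / (k.factorial * Real.Gamma (k + α + 1)) *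
    (t / 2) ^ (2 * k) * hpow

lemma hasSum_normalizedBesselJ (hα : -1 < α) {t : ℝ} (ht : 0 ≤ t) :
    HasSum (fun k => normalizedBesselCoeff α k * (t / 2) ^ (2 * k)) (normalizedBesselJ α t) := by
  rcases ht.eq_or_lt with rfl | ht
  · have h := hasSum_single 0 (f := fun k => normalizedBesselCoeff α k * ((0 : ℝ) / 2) ^ (2 * k))
      fun k hk => by simp [hk]
    simpa [normalizedBesselJ, normalizedBesselCoeff_zero_right hα] using h
  · rw [normalizedBesselJ_eq_tsum_of_pos α ht]
    exact (summable_norm_normalizedBesselJ_term hα t).of_norm.hasSum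

end Series

section Sonine

open ProbabilityTheory

variable {μ ν : ℝ}

lemma normalizedBesselCoeff_add (hμ : -1 < μ) (hν : 0 < ν) (k : ℕ) :
    normalizedBesselCoeff (μ + ν) k =
      normalizedBesselCoeff μ k * (beta (μ + 1 + k) ν / beta (μ + 1) ν) := by
  have hμ' : 0 < μ + 1 := neg_lt_iff_pos_add.1 hμ
  have hΓμ := (Real.Gamma_pos_of_pos hμ').ne'
  have hΓν := (Real.Gamma_pos_of_pos hν).ne'
  have hΓμk := (Real.Gamma_pos_of_pos (show 0 < μ + 1 + k by positivity)).ne'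
  have hΓμν := (Real.Gamma_pos_of_pos (show 0 < μ + 1 + ν by positivity)).ne'
  have hΓμνk := (Real.Gamma_pos_of_pos (show 0 < μ + 1 + k + ν by positivity)).ne'
  rw [normalizedBesselCoeff, normalizedBesselCoeff, beta, beta,
    show μ + ν + 1 = μ + 1 + ν by ring, show k + (μ + ν) + 1 = μ + 1 + k + ν by ring,
    show k + μ + 1 = μ + 1 + k by ring]
  field_simp [hΓμ, hΓν, hΓμk, hΓμν, hΓμνk]

lemma ae_norm_normalizedBesselJ_term_sqrt_le (a b μ t : ℝ) (k : ℕ) :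
    ∀ᵐ u ∂betaMeasure a b, ‖normalizedBesselCoeff μ k * (t * √u / 2) ^ (2 * k)‖ ≤
      ‖normalizedBesselCoeff μ k * (t / 2) ^ (2 * k)‖ := by
  filter_upwards [ae_mem_Ioo_betaMeasure a b] with u hu
  have hsqrt : |√u| ≤ 1 := by
    rw [abs_of_nonneg u.sqrt_nonneg]
    exact Real.sqrt_le_one.2 hu.2.le
  rw [mul_div_right_comm, mul_pow, ← mul_assoc, norm_mul _ (√u ^ _), norm_pow]
  exact mul_le_of_le_one_right (norm_nonneg _) (pow_le_one₀ (norm_nonneg _) hsqrt)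

lemma integrable_normalizedBesselJ_sqrt {a b : ℝ} (ha : 0 < a) (hb : 0 < b) (hμ : -1 < μ)
    {t : ℝ} (ht : 0 ≤ t) :
    Integrable (fun u => normalizedBesselJ μ (t * √u)) (betaMeasure a b) :=
  have := isProbabilityMeasureBeta ha hb
  integrable_of_hasSum_of_norm_le (fun _ => by fun_prop)
    (ae_norm_normalizedBesselJ_term_sqrt_le a b μ t)
    (summable_norm_normalizedBesselJ_term hμ t)
    (.of_forall fun u => hasSum_normalizedBesselJ hμ (mul_nonneg ht u.sqrt_nonneg))

lemma integral_normalizedBesselJ_sqrt (hμ : -1 < μ) (hν : 0 < ν) {t : ℝ} (ht : 0 ≤ t) :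
    ∫ u, normalizedBesselJ μ (t * √u) ∂betaMeasure (μ + 1) ν = normalizedBesselJ (μ + ν) t := by
  have hμ' : 0 < μ + 1 := neg_lt_iff_pos_add.1 hμ
  have := isProbabilityMeasureBeta hμ' hν
  refine (hasSum_integral_of_dominated_convergence _ (fun k => by fun_prop)
    (ae_norm_normalizedBesselJ_term_sqrt_le (μ + 1) ν μ t)
    (.of_forall fun _ => summable_norm_normalizedBesselJ_term hμ t) (integrable_const _)
    (.of_forall fun u => hasSum_normalizedBesselJ hμ (mul_nonneg ht u.sqrt_nonneg))).unique ?_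
  refine (hasSum_normalizedBesselJ (by linarith) ht).congr_fun fun k => ?_
  have hterm : ∀ᵐ u ∂betaMeasure (μ + 1) ν, normalizedBesselCoeff μ k * (t * √u / 2) ^ (2 * k) =
      normalizedBesselCoeff μ k * (t / 2) ^ (2 * k) * u ^ k := by
    filter_upwards [ae_mem_Ioo_betaMeasure (μ + 1) ν] with u hu
    rw [mul_div_right_comm, mul_pow, pow_mul √u, Real.sq_sqrt hu.1.le, mul_assoc]
  rw [integral_congr_ae hterm, integral_const_mul, integral_pow_betaMeasure hμ' hν,
    normalizedBesselCoeff_add hμ hν]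
  ring

lemma le_normalizedBesselJ_add {c : ℝ} (hμ : -1 < μ) (hν : 0 < ν)
    (hc : ∀ t, 0 ≤ t → c ≤ normalizedBesselJ μ t) {t : ℝ} (ht : 0 ≤ t) :
    c ≤ normalizedBesselJ (μ + ν) t := by
  have hμ' : 0 < μ + 1 := neg_lt_iff_pos_add.1 hμ
  have := isProbabilityMeasureBeta hμ' hν
  calc c = ∫ _, c ∂betaMeasure (μ + 1) ν := by simp
    _ ≤ ∫ u, normalizedBesselJ μ (t * √u) ∂betaMeasure (μ + 1) ν :=
      integral_mono (integrable_const c) (integrable_normalizedBesselJ_sqrt hμ' hν hμ ht)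
        fun u => hc _ (mul_nonneg ht u.sqrt_nonneg)
    _ = normalizedBesselJ (μ + ν) t := integral_normalizedBesselJ_sqrt hμ hν ht

end Sonine

section OrderZero

lemma normalizedBesselCoeff_zero_left (k : ℕ) :
    normalizedBesselCoeff 0 k = (-1) ^ k * 4 ^ k / (2 * k).factorial *
      ∏ i ∈ Finset.range k, (2 * (i : ℝ) + 1) / (2 * i + 2) := by
  induction k with
  | zero => simp [normalizedBesselCoeff]
  | succ k ih =>
    rw [normalizedBesselCoeff_succ neg_one_lt_zero, ih, Finset.prod_range_succ, Nat.mul_succ,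
      Nat.factorial_succ (2 * k + 1), Nat.factorial_succ (2 * k)]
    push_cast
    field_simp
    ring

lemma hasSum_integral_cos_mul_sin (t : ℝ) :
    HasSum (fun k : ℕ => ∫ θ in (0 : ℝ)..π,
        (-1) ^ k * (t * Real.sin θ) ^ (2 * k) / (2 * k).factorial)
      (∫ θ in (0 : ℝ)..π, Real.cos (t * Real.sin θ)) := by
  refine intervalIntegral.hasSum_integral_of_dominated_convergence
    (fun k _ => |t| ^ (2 * k) / (2 * k).factorial) (fun k => by fun_prop)
    (fun k => .of_forall fun θ _ => ?_) (.of_forall fun θ _ => ?_) (by simp)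
    (.of_forall fun θ _ => Real.hasSum_cos _)
  · rw [norm_div, norm_mul, norm_pow, norm_neg, norm_one, one_pow, one_mul, norm_pow, norm_mul,
      Real.norm_natCast]
    gcongr
    exact mul_le_of_le_one_right (abs_nonneg t) (Real.abs_sin_le_one θ)
  · exact (Real.summable_pow_div_factorial |t|).comp_injective (mul_right_injective₀ two_ne_zero)

lemma integral_cos_mul_sin {t : ℝ} (ht : 0 ≤ t) :
    ∫ θ in (0 : ℝ)..π, Real.cos (t * Real.sin θ) = π * normalizedBesselJ 0 t := by
  refine (hasSum_integral_cos_mul_sin t).unique ?_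
  refine ((hasSum_normalizedBesselJ neg_one_lt_zero ht).mul_left π).congr_fun fun k => ?_
  have hterm (θ : ℝ) : (-1) ^ k * (t * Real.sin θ) ^ (2 * k) / (2 * k).factorial =
      (-1) ^ k * t ^ (2 * k) / (2 * k).factorial * Real.sin θ ^ (2 * k) := by
    rw [mul_pow]; ring
  have hfour : (2 : ℝ) ^ (2 * k) = 4 ^ k := by rw [pow_mul]; norm_num
  simp only [hterm]
  rw [intervalIntegral.integral_const_mul, integral_sin_pow_even, normalizedBesselCoeff_zero_left,
    div_pow, hfour]
  field_simp

lemma integral_cos_mul_sin_add (t x : ℝ) :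
    ∫ θ in (0 : ℝ)..π, Real.cos (t * Real.sin (θ + x)) =
      ∫ θ in (0 : ℝ)..π, Real.cos (t * Real.sin θ) := by
  have hperiodic : Function.Periodic (fun θ => Real.cos (t * Real.sin θ)) π := fun θ => by
    simp only [Real.sin_add_pi, mul_neg, Real.cos_neg]
  rw [intervalIntegral.integral_comp_add_right (fun θ => Real.cos (t * Real.sin θ)), add_comm π x,
    zero_add, hperiodic.intervalIntegral_add_eq x 0, zero_add]

lemma neg_three_halves_le_cos_add_cos_add_cos {a b c : ℝ} (h : a + b + c = 0) :
    -3 / 2 ≤ Real.cos a + Real.cos b + Real.cos c := by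
  obtain rfl : c = -(a + b) := by linarith
  -- Both sides are `‖1 + exp (i a) + exp (-i b)‖ ^ 2`.
  have hnormSq : 3 + 2 * (Real.cos a + Real.cos b + Real.cos (-(a + b))) =
      (1 + Real.cos a + Real.cos b) ^ 2 + (Real.sin a - Real.sin b) ^ 2 := by
    rw [Real.cos_neg, Real.cos_add]
    linear_combination -(Real.sin_sq_add_cos_sq a) - Real.sin_sq_add_cos_sq b
  linarith [sq_nonneg (1 + Real.cos a + Real.cos b), sq_nonneg (Real.sin a - Real.sin b)]

lemma sin_add_sin_add_sin_eq_zero (θ : ℝ) :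
    Real.sin θ + Real.sin (θ + 2 * π / 3) + Real.sin (θ + 4 * π / 3) = 0 := by
  have hcos : Real.cos (π / 3 + π) = -(1 / 2) := by rw [Real.cos_add_pi, Real.cos_pi_div_three]
  have hcos' : Real.cos (π - π / 3) = -(1 / 2) := by rw [Real.cos_pi_sub, Real.cos_pi_div_three]
  rw [show 4 * π / 3 = π / 3 + π by ring, show 2 * π / 3 = π - π / 3 by ring, Real.sin_add θ,
    Real.sin_add θ, hcos, hcos', Real.sin_add_pi, Real.sin_pi_sub]
  ring

lemma neg_half_le_normalizedBesselJ_zero {t : ℝ} (ht : 0 ≤ t) :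
    -1 / 2 ≤ normalizedBesselJ 0 t := by
  have hi (x : ℝ) :
      IntervalIntegrable (fun θ => Real.cos (t * Real.sin (θ + x))) volume 0 π :=
    Continuous.intervalIntegrable (by fun_prop) _ _
  have hi₀ : IntervalIntegrable (fun θ => Real.cos (t * Real.sin θ)) volume 0 π :=
    Continuous.intervalIntegrable (by fun_prop) _ _
  have hmean : π * (-3 / 2) ≤ 3 * (π * normalizedBesselJ 0 t) := calc
    π * (-3 / 2) = ∫ _ in (0 : ℝ)..π, (-3 / 2 : ℝ) := by
      rw [intervalIntegral.integral_const, sub_zero, smul_eq_mul]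
    _ ≤ ∫ θ in (0 : ℝ)..π, (Real.cos (t * Real.sin θ) +
          Real.cos (t * Real.sin (θ + 2 * π / 3)) + Real.cos (t * Real.sin (θ + 4 * π / 3))) := by
      refine intervalIntegral.integral_mono_on pi_pos.le (by simp)
        ((hi₀.add (hi _)).add (hi _)) fun θ _ => neg_three_halves_le_cos_add_cos_add_cos ?_
      rw [← mul_add, ← mul_add, sin_add_sin_add_sin_eq_zero, mul_zero]
    _ = 3 * (π * normalizedBesselJ 0 t) := by
      rw [intervalIntegral.integral_add (hi₀.add (hi _)) (hi _),
        intervalIntegral.integral_add hi₀ (hi _), integral_cos_mul_sin_add,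
        integral_cos_mul_sin_add, integral_cos_mul_sin ht]
      ring
  nlinarith [pi_pos]

end OrderZero

theorem omega_ge_neg_half_general {α : ℝ} (hα : 0 ≤ α) {t : ℝ} (ht : 0 ≤ t) :
    -1 / 2 ≤ normalizedBesselJ α t := by
  rcases hα.eq_or_lt with rfl | hα
  · exact neg_half_le_normalizedBesselJ_zero ht
  · simpa only [zero_add] using le_normalizedBesselJ_add neg_one_lt_zero hα
      (fun _ => neg_half_le_normalizedBesselJ_zero) ht

theorem omega_ge_neg_half (n : ℕ) (hn : 2 ≤ n) (t : ℝ) (ht : 0 ≤ t) :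
    Omega n t ≥ -1/2 := by
  have hn' : (2 : ℝ) ≤ n := Nat.ofNat_le_cast.2 hn
  exact Omega_eq_normalizedBesselJ n t ▸ omega_ge_neg_half_general (by linarith) ht
end

section
/- (Main theorem) Let d_1,…,d_N be positive reals and let A ⊆ ℝ^n be a Lebesgue measurable set such that no two points of A are at Euclidean distance d_k for any k. Suppose z_0, z_1, …, z_N are real numbers with z_0 + z_1 + ⋯ + z_N ≥ 1 and z_0 + Σ_{k=1}^N z_k Ω_n(t d_k) ≥ 0 for all t ≥ 0. Then the upper density of A satisfies δ̄(A) ≤ z_0. -/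
open MeasureTheory Filter Real

/-!
Rescaling and periodising `A ∩ [-T, T]^n` with a period slightly larger than `2T` gives a subset `B`
of the torus that still avoids the distances `d k`, so the autocorrelation of its indicator
function `f` vanishes on the spheres of radius `d k`. By Parseval, the autocorrelation at `y` is
`∑ m, |f̂(m)|² e(m · y)`, and averaging over the sphere of radius `d k` turns the character into
`Ω_n(2π|m| d k)`. Hence `∑ m, |f̂(m)|² (z₀ + ∑ k, z k Ω_n(2π|m| d k)) = z₀ vol B`. All terms on the
left are nonnegative and the one at `m = 0` is at least `(vol B)²`, so `vol B ≤ z₀`.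

That `Ω_n` is the spherical average of the cosine is checked on power series: the even moments of
the sphere are read off from those of a Gaussian, written in polar coordinates.
-/

open Module (finrank)
open scoped ComplexConjugate RealInnerProductSpace Topology

section PolarCoordinates

theorem integral_volumeIoiPow {F : Type*} [NormedAddCommGroup F] [NormedSpace ℝ F] (n : ℕ)
    (g : ℝ → F) :
    ∫ r : Set.Ioi (0 : ℝ), g r ∂Measure.volumeIoiPow n =
      ∫ r in Set.Ioi (0 : ℝ), r ^ n • g r := by
  simp only [Measure.volumeIoiPow, ENNReal.ofReal]
  rw [integral_withDensity_eq_integral_smul (by fun_prop),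
    integral_subtype_comap measurableSet_Ioi fun r ↦ Real.toNNReal (r ^ n) • g r]
  refine setIntegral_congr_fun measurableSet_Ioi fun r hr ↦ ?_
  simp only [NNReal.smul_def, Real.coe_toNNReal _ (pow_nonneg hr.out.le _)]

theorem integral_homogeneous_mul_radial {E : Type*} [NormedAddCommGroup E] [NormedSpace ℝ E]
    [FiniteDimensional ℝ E] [MeasurableSpace E] [BorelSpace E] [Nontrivial E] (μ : Measure E)
    [μ.IsAddHaarMeasure] {m : ℕ} {h : E → ℝ} (hh : ∀ r > 0, ∀ x, h (r • x) = r ^ m * h x)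
    (g : ℝ → ℝ) :
    ∫ x, h x * g ‖x‖ ∂μ =
      (∫ ξ, h (ξ : Metric.sphere (0 : E) 1) ∂μ.toSphere) *
        ∫ r in Set.Ioi (0 : ℝ), r ^ (finrank ℝ E - 1) * (r ^ m * g r) := by
  have polar (x : ({0}ᶜ : Set E)) : h x * g ‖(x : E)‖ =
      h (homeomorphUnitSphereProd E x).1 *
        ((homeomorphUnitSphereProd E x).2 ^ m * g (homeomorphUnitSphereProd E x).2) := by
    have hx : 0 < ‖(x : E)‖ := norm_pos_iff.2 x.2
    rw [homeomorphUnitSphereProd_apply_fst_coe, homeomorphUnitSphereProd_apply_snd_coe,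
      hh _ (inv_pos.2 hx), inv_pow]
    field_simp
  calc
    ∫ x, h x * g ‖x‖ ∂μ = ∫ x : ({0}ᶜ : Set E), h x * g ‖(x : E)‖ ∂μ.comap (↑) := by
      rw [integral_subtype_comap (measurableSet_singleton _).compl fun x ↦ h x * g ‖x‖,
        restrict_compl_singleton]
    _ = ∫ p, h p.1 * (p.2 ^ m * g p.2) ∂μ.toSphere.prod (.volumeIoiPow (finrank ℝ E - 1)) := by
      simp_rw [polar]
      exact μ.measurePreserving_homeomorphUnitSphereProd.integral_comp
        (Homeomorph.measurableEmbedding _)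
        fun p ↦ h p.1 * ((p.2 : ℝ) ^ m * g p.2)
    _ = _ := by
      rw [integral_prod_mul (fun ξ : Metric.sphere (0 : E) 1 ↦ h ξ)
        fun r : Set.Ioi (0 : ℝ) ↦ (r : ℝ) ^ m * g r,
        integral_volumeIoiPow _ fun r : ℝ ↦ r ^ m * g r]
      simp only [smul_eq_mul]

end PolarCoordinates

section GaussianMoments

theorem integral_Ioi_pow_mul_exp_neg_sq (m : ℕ) :
    ∫ r in Set.Ioi (0 : ℝ), r ^ m * exp (-r ^ 2) = Gamma ((m + 1) / 2) / 2 := by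
  have h := integral_rpow_mul_exp_neg_rpow (p := 2) (q := m) two_pos
    (by linarith [m.cast_nonneg (α := ℝ)])
  simp only [rpow_natCast, rpow_ofNat] at h
  rw [h, one_div_mul_eq_div]

theorem integral_pow_two_mul_mul_exp_neg_sq (k : ℕ) :
    ∫ t : ℝ, t ^ (2 * k) * exp (-t ^ 2) = Gamma (k + 1 / 2) := by
  have h := integral_comp_abs (f := fun t : ℝ ↦ t ^ (2 * k) * exp (-t ^ 2))
  simp only [(even_two_mul k).pow_abs, sq_abs] at h
  rw [h, integral_Ioi_pow_mul_exp_neg_sq, mul_div_cancel₀ _ two_ne_zero]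
  congr 1
  push_cast
  ring

variable {E : Type*} [NormedAddCommGroup E] [InnerProductSpace ℝ E] [FiniteDimensional ℝ E]

theorem exists_orthonormalBasis_norm_smul_eq {ι : Type*} [Fintype ι]
    (hι : finrank ℝ E = Fintype.card ι) (i : ι) (u : E) :
    ∃ b : OrthonormalBasis ι ℝ E, ‖u‖ • b i = u := by
  rcases eq_or_ne u 0 with rfl | hu
  · exact ⟨(stdOrthonormalBasis ℝ E).reindex (Fintype.equivFinOfCardEq hι.symm).symm, by simp⟩
  · obtain ⟨b, hb⟩ := Orthonormal.exists_orthonormalBasis_extension_of_card_eq hι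
      (v := fun _ ↦ ‖u‖⁻¹ • u) (s := {i})
      ⟨fun _ ↦ by simp [norm_smul, hu], fun j k hjk ↦ (hjk (Subsingleton.elim j k)).elim⟩
    exact ⟨b, by rw [hb i rfl, smul_inv_smul₀ (norm_ne_zero_iff.2 hu)]⟩

variable [MeasurableSpace E] [BorelSpace E] [Nontrivial E]

theorem integral_apply_mul_exp_neg_norm_sq {ι : Type*} [Fintype ι] (i : ι) (f : ℝ → ℝ) :
    ∫ x : EuclideanSpace ℝ ι, f (x i) * exp (-‖x‖ ^ 2) =
      (∫ t, f t * exp (-t ^ 2)) * √π ^ (Fintype.card ι - 1) := by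
  classical
  have factor (y : ι → ℝ) : f (y i) * exp (-‖WithLp.toLp 2 y‖ ^ 2) =
      ∏ j, (if j = i then f (y j) else 1) * exp (-y j ^ 2) := by
    rw [Finset.prod_mul_distrib, ← exp_sum, Finset.sum_neg_distrib, EuclideanSpace.norm_sq_eq]
    simp
  rw [← (PiLp.volume_preserving_toLp ι).integral_comp
    (MeasurableEquiv.toLp 2 (ι → ℝ)).measurableEmbedding]
  simp_rw [factor]
  rw [integral_fintype_prod_volume_eq_prod
      fun j t ↦ (if j = i then f t else 1) * exp (-t ^ 2),
    Fintype.prod_eq_mul_prod_compl i, Finset.prod_congr rfl (g := fun _ ↦ √π)]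
  · simp [Finset.card_compl]
  · intro j hj
    simpa [show j ≠ i by simpa using hj] using integral_gaussian 1

theorem integral_comp_inner_mul_exp_neg_norm_sq (u : E) (f : ℝ → ℝ) :
    ∫ x : E, f ⟪u, x⟫ * exp (-‖x‖ ^ 2) =
      (∫ t, f (‖u‖ * t) * exp (-t ^ 2)) * √π ^ (finrank ℝ E - 1) := by
  have : NeZero (finrank ℝ E) := ⟨Module.finrank_pos.ne'⟩
  obtain ⟨b, hb⟩ := exists_orthonormalBasis_norm_smul_eq
    (Fintype.card_fin (finrank ℝ E)).symm 0 u
  have coords (x : E) : f ⟪u, x⟫ * exp (-‖x‖ ^ 2) =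
      f (‖u‖ * b.repr x 0) * exp (-‖b.repr x‖ ^ 2) := by
    rw [b.repr_apply_apply, ← real_inner_smul_left, hb, b.repr.norm_map]
  simp_rw [coords]
  rw [b.measurePreserving_repr.integral_comp b.repr.toHomeomorph.measurableEmbedding
      fun y ↦ f (‖u‖ * y 0) * exp (-‖y‖ ^ 2),
    integral_apply_mul_exp_neg_norm_sq 0 fun t ↦ f (‖u‖ * t), Fintype.card_fin]

end GaussianMoments

section SphereAverages

theorem hasSum_average_of_summable_norm_bound {α ι : Type*} [MeasurableSpace α] [Countable ι]
    {μ : Measure α} [IsFiniteMeasure μ] {F : ι → α → ℝ} {f : α → ℝ} {u : ι → ℝ}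
    (hF : ∀ i, AEStronglyMeasurable (F i) μ) (hu : Summable u) (hFu : ∀ i x, ‖F i x‖ ≤ u i)
    (hf : ∀ x, HasSum (F · x) (f x)) :
    HasSum (fun i ↦ ⨍ x, F i x ∂μ) (⨍ x, f x ∂μ) := by
  simp only [average_eq]
  exact (hasSum_integral_of_dominated_convergence (fun i _ ↦ u i) hF
    (fun i ↦ .of_forall (hFu i)) (.of_forall fun _ ↦ hu) (integrable_const _)
    (.of_forall hf)).const_smul _

variable {E : Type*} [NormedAddCommGroup E] [InnerProductSpace ℝ E] [FiniteDimensional ℝ E]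
  [MeasurableSpace E] [BorelSpace E] [Nontrivial E]

theorem integral_sphere_inner_pow_mul_Gamma (u : E) (k : ℕ) :
    (∫ ξ : Metric.sphere (0 : E) 1, ⟪u, ξ⟫ ^ (2 * k) ∂(volume : Measure E).toSphere) *
        (Gamma (k + finrank ℝ E / 2) / 2) =
      ‖u‖ ^ (2 * k) * Gamma (k + 1 / 2) * √π ^ (finrank ℝ E - 1) := by
  have radial : ∫ r in Set.Ioi (0 : ℝ), r ^ (finrank ℝ E - 1) * (r ^ (2 * k) * exp (-r ^ 2)) =
      Gamma (k + finrank ℝ E / 2) / 2 := by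
    simp_rw [← mul_assoc, ← pow_add]
    rw [integral_Ioi_pow_mul_exp_neg_sq]
    congr 2
    push_cast [Nat.cast_sub (Module.finrank_pos (R := ℝ) (M := E))]
    ring
  rw [← radial, ← integral_homogeneous_mul_radial volume (h := fun x : E ↦ ⟪u, x⟫ ^ (2 * k))
      (fun r _ x ↦ by rw [real_inner_smul_right, mul_pow]) fun r ↦ exp (-r ^ 2),
    integral_comp_inner_mul_exp_neg_norm_sq u fun s ↦ s ^ (2 * k)]
  simp_rw [mul_pow ‖u‖, mul_assoc]
  rw [integral_const_mul, integral_pow_two_mul_mul_exp_neg_sq]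
  simp only [mul_assoc]

theorem Gamma_nat_add_half_eq_factorial (k : ℕ) :
    Gamma (k + 1 / 2) = (2 * k).factorial / (4 ^ k * k.factorial) * √π := by
  have h := Gamma_mul_Gamma_add_half (k + 1 / 2)
  rw [add_assoc, add_halves, Gamma_nat_eq_factorial,
    show 2 * ((k : ℝ) + 1 / 2) = (2 * k : ℕ) + 1 by push_cast; ring, Gamma_nat_eq_factorial,
    sub_add_cancel_right, rpow_neg two_pos.le, rpow_natCast, pow_mul] at h
  rw [eq_div_of_mul_eq (by positivity) h]
  norm_num
  field_simp

theorem average_sphere_inner_pow (u : E) (k : ℕ) :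
    ⨍ ξ : Metric.sphere (0 : E) 1, ⟪u, ξ⟫ ^ (2 * k) ∂(volume : Measure E).toSphere =
      (2 * k).factorial * (Gamma (finrank ℝ E / 2) /
        (k.factorial * Gamma (k + finrank ℝ E / 2)) * (‖u‖ / 2) ^ (2 * k)) := by
  have hn : (0 : ℝ) < finrank ℝ E := mod_cast Module.finrank_pos
  have hΓ (j : ℕ) : Gamma (j + finrank ℝ E / 2) ≠ 0 := (Gamma_pos_of_pos (by positivity)).ne'
  have mass := integral_sphere_inner_pow_mul_Gamma u 0
  simp only [mul_zero, pow_zero, integral_const, smul_eq_mul, mul_one, Nat.cast_zero, zero_add,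
    one_mul, Gamma_one_half_eq] at mass
  have hΓ₀ : Gamma (finrank ℝ E / 2) ≠ 0 := by simpa using hΓ 0
  rw [average_eq, smul_eq_mul, eq_div_of_mul_eq (by simpa using hΓ k)
    (integral_sphere_inner_pow_mul_Gamma u k), eq_div_of_mul_eq (by simpa using hΓ₀) mass]
  rw [Gamma_nat_add_half_eq_factorial, div_pow, pow_mul 2]
  field_simp [hΓ k]
  norm_num

theorem Omega_zero_right (n : ℕ) : Omega n 0 = 1 := if_pos rfl

theorem Omega_eq_tsum {n : ℕ} (hn : 0 < n) {t : ℝ} (ht : 0 ≤ t) :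
    Omega n t = ∑' k : ℕ, (-1) ^ k *
      (Gamma (n / 2) / (k.factorial * Gamma (k + n / 2)) * (t / 2) ^ (2 * k)) := by
  have hΓ : Gamma (n / 2 : ℝ) ≠ 0 := (Gamma_pos_of_pos (by positivity)).ne'
  rcases ht.eq_or_lt with rfl | ht
  · rw [Omega_zero_right, tsum_eq_single 0 fun k hk ↦ by simp [hk]]
    simp [hΓ]
  · rw [Omega, if_neg ht.ne', besselJ, ← tsum_mul_left]
    refine tsum_congr fun k ↦ ?_
    have cancel : (2 / t) ^ (((n : ℝ) - 2) / 2) * (t / 2) ^ (((n : ℝ) - 2) / 2) = 1 := by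
      rw [← mul_rpow (by positivity) (by positivity), div_mul_div_cancel₀ ht.ne',
        div_self two_ne_zero, one_rpow]
    rw [show (k : ℝ) + (n - 2) / 2 + 1 = k + n / 2 by ring, rpow_add (by positivity),
      show (t / 2) ^ (2 * (k : ℝ)) = (t / 2) ^ (2 * k) by exact_mod_cast rpow_natCast _ (2 * k)]
    linear_combination (Gamma (n / 2) * ((-1) ^ k / (k.factorial * Gamma (k + n / 2)) *
      (t / 2) ^ (2 * k))) * cancel

theorem average_sphere_cos_inner (u : E) :
    ⨍ ξ : Metric.sphere (0 : E) 1, cos ⟪u, ξ⟫ ∂(volume : Measure E).toSphere =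
      Omega (finrank ℝ E) ‖u‖ := by
  have bound (k : ℕ) (ξ : Metric.sphere (0 : E) 1) :
      ‖(-1) ^ k * ⟪u, ξ⟫ ^ (2 * k) / (2 * k).factorial‖ ≤ ‖u‖ ^ (2 * k) / (2 * k).factorial := by
    have := abs_real_inner_le_norm u ξ
    rw [norm_eq_of_mem_sphere, mul_one] at this
    simp only [norm_div, norm_mul, norm_pow, norm_neg, norm_one, one_pow, one_mul,
      RCLike.norm_natCast, Real.norm_eq_abs]
    gcongr
  have summable_bound : Summable fun k : ℕ ↦ ‖u‖ ^ (2 * k) / (2 * k).factorial :=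
    (summable_pow_div_factorial ‖u‖).comp_injective (mul_right_injective₀ two_ne_zero)
  rw [Omega_eq_tsum Module.finrank_pos (norm_nonneg u), ← (hasSum_average_of_summable_norm_bound
    (fun k ↦ by fun_prop) summable_bound bound fun ξ ↦ hasSum_cos _).tsum_eq]
  refine tsum_congr fun k ↦ ?_
  have average := average_sphere_inner_pow u k
  rw [average_eq, smul_eq_mul] at average ⊢
  rw [integral_div, integral_const_mul, mul_div_assoc, mul_left_comm, ← mul_div_assoc, average,
    mul_div_cancel_left₀ _ (by positivity)]

theorem hasSum_mul_Omega {ι : Type*} [Countable ι] {a : ι → ℝ} (ha : Summable a) (v : ι → E) :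
    HasSum (fun i ↦ a i * Omega (finrank ℝ E) ‖v i‖)
      (⨍ ξ : Metric.sphere (0 : E) 1, ∑' i, a i * cos ⟪v i, ξ⟫
        ∂(volume : Measure E).toSphere) := by
  have bound (i : ι) (ξ : Metric.sphere (0 : E) 1) : ‖a i * cos ⟪v i, ξ⟫‖ ≤ ‖a i‖ := by
    rw [norm_mul]
    exact mul_le_of_le_one_right (norm_nonneg _) (abs_cos_le_one _)
  have h := hasSum_average_of_summable_norm_bound (μ := (volume : Measure E).toSphere)
    (F := fun i ξ ↦ a i * cos ⟪v i, ξ⟫) (fun i ↦ by fun_prop) ha.norm bound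
    fun ξ ↦ (Summable.of_norm_bounded ha.norm (bound · ξ)).hasSum
  refine h.congr_fun fun i ↦ ?_
  simp only [← average_sphere_cos_inner, average_eq, integral_const_mul, smul_eq_mul, mul_left_comm]

end SphereAverages

-- The Fourier theory of `UnitAddTorus` uses these instances, which Mathlib keeps local.
attribute [local instance] instMeasureSpaceUnitAddCircle instIsAddHaarMeasureUnitAddCircleVolume
  instIsProbabilityMeasureUnitAddCircleVolume

open UnitAddTorus

section TorusCovering

variable {ι : Type*}

/-- The covering map `ℝ^ι → (ℝ/ℤ)^ι`, along which subsets of `ℝ^ι` are periodised. -/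
def toUnitAddTorus (x : EuclideanSpace ℝ ι) : UnitAddTorus ι := fun i ↦ (x i : UnitAddCircle)

/-- The cube `[-r, r]^ι`, which truncates sets in `upperDensity`. -/
def cube (ι : Type*) (r : ℝ) : Set (EuclideanSpace ℝ ι) := {x | ∀ i, |x i| ≤ r}

theorem measurableSet_cube [Countable ι] (r : ℝ) : MeasurableSet (cube ι r) := by
  simp only [cube, Set.ofPred_forall]
  exact .iInter fun i ↦ measurableSet_le (by fun_prop) measurable_const

theorem eq_of_toUnitAddTorus_eq {x y : EuclideanSpace ℝ ι}
    (h : toUnitAddTorus x = toUnitAddTorus y) (hxy : ∀ i, |x i - y i| < 1) : x = y := by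
  ext i
  have hi : ((x i - y i : ℝ) : UnitAddCircle) = 0 := by
    rw [AddCircle.coe_sub, sub_eq_zero]
    exact congrFun h i
  obtain ⟨j, hj⟩ := (AddCircle.coe_eq_zero_iff (1 : ℝ)).1 hi
  rw [zsmul_one] at hj
  have abs_lt_one : |(j : ℝ)| < 1 := by simpa only [hj] using hxy i
  have hj₀ : j = 0 := Int.abs_lt_one_iff.1 (by exact_mod_cast abs_lt_one)
  rwa [hj₀, Int.cast_zero, eq_comm, sub_eq_zero] at hj

theorem toUnitAddTorus_image_eq_preimage {C : Set (EuclideanSpace ℝ ι)} {r : ℝ}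
    (hC : C ⊆ cube ι r) (hr : 2 * r < 1) :
    toUnitAddTorus '' C = measurableEquivPiIoc (fun _ ↦ -1 / 2) ⁻¹'
      (Subtype.val ⁻¹' (WithLp.toLp 2 ⁻¹' C)) := by
  ext y
  constructor
  · rintro ⟨x, hx, rfl⟩
    have hIoc (i : ι) : x i ∈ Set.Ioc (-1 / 2 : ℝ) (-1 / 2 + 1) := by
      have := abs_le.1 (hC hx i)
      constructor <;> linarith
    have := (measurableEquivPiIoc fun _ ↦ -1 / 2).apply_symm_apply ⟨x.ofLp, hIoc⟩
    rw [coe_symm_measurableEquivPiIoc_apply] at this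
    change WithLp.toLp 2 (measurableEquivPiIoc _ fun i ↦ (x i : UnitAddCircle)).1 ∈ C
    rwa [this]
  · intro hy
    exact ⟨_, hy, (measurableEquivPiIoc fun _ ↦ -1 / 2).symm_apply_apply y⟩

theorem measurableSet_toUnitAddTorus_image {C : Set (EuclideanSpace ℝ ι)}
    (hC : MeasurableSet C) {r : ℝ} (hCr : C ⊆ cube ι r) (hr : 2 * r < 1) :
    MeasurableSet (toUnitAddTorus '' C) := by
  rw [toUnitAddTorus_image_eq_preimage hCr hr]
  exact (measurableEquivPiIoc _).measurable
    (measurable_subtype_coe ((WithLp.measurable_toLp 2 _) hC))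

variable [Fintype ι]

theorem volume_toUnitAddTorus_image {C : Set (EuclideanSpace ℝ ι)}
    (hC : MeasurableSet C) {r : ℝ} (hCr : C ⊆ cube ι r) (hr : 2 * r < 1) :
    volume (toUnitAddTorus '' C) = volume C := by
  have hC' : MeasurableSet (WithLp.toLp 2 ⁻¹' C : Set (ι → ℝ)) := WithLp.measurable_toLp 2 _ hC
  have subset_Ioc : (WithLp.toLp 2 ⁻¹' C : Set (ι → ℝ)) ⊆
      {x | ∀ i, x i ∈ Set.Ioc (-1 / 2 : ℝ) (-1 / 2 + 1)} := by
    intro x hx i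
    have := abs_le.1 (hCr hx i)
    constructor <;> linarith
  calc
    volume (toUnitAddTorus '' C) = volume (WithLp.toLp 2 ⁻¹' C : Set (ι → ℝ)) := by
      rw [toUnitAddTorus_image_eq_preimage hCr hr,
        (measurePreserving_equivPiIoc _).measure_preimage
          (measurable_subtype_coe hC').nullMeasurableSet,
        comap_subtype_coe_apply (.univ_pi' fun _ ↦ measurableSet_Ioc)]
      exact congrArg volume
        (Set.image_preimage_eq_of_subset fun x hx ↦ ⟨⟨x, subset_Ioc hx⟩, rfl⟩)
    _ = volume C := (PiLp.volume_preserving_toLp ι).measure_preimage hC.nullMeasurableSet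

end TorusCovering

section TorusFourier

variable {ι : Type*}

/-- The frequency vector `2πm` of the character `mFourier m`, lifted to `ℝ^ι`: its real part there
is `x ↦ cos ⟪frequency m, x⟫`. -/
noncomputable def frequency (m : ι → ℤ) : EuclideanSpace ℝ ι := WithLp.toLp 2 fun i ↦ 2 * π * m i

theorem frequency_zero : frequency (0 : ι → ℤ) = 0 := by
  ext i
  simp [frequency]

variable [Fintype ι]

theorem mFourierCoeff_zero (f : UnitAddTorus ι → ℂ) : mFourierCoeff f 0 = ∫ x, f x := by
  simp [mFourierCoeff, mFourier_zero]

theorem mFourier_add_right (m : ι → ℤ) (x y : UnitAddTorus ι) :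
    mFourier m (x + y) = mFourier m x * mFourier m y := by
  simp [mFourier, fourier_apply, AddCircle.toCircle_add, Finset.prod_mul_distrib]

theorem mFourierCoeff_comp_add_right (f : UnitAddTorus ι → ℂ) (y : UnitAddTorus ι) (m : ι → ℤ) :
    mFourierCoeff (fun x ↦ f (x + y)) m = mFourier m y * mFourierCoeff f m := by
  have shift (x : UnitAddTorus ι) : mFourier (-m) x • f (x + y) =
      mFourier m y * (mFourier (-m) (x + y) • f (x + y)) := by
    have unit : mFourier m y * mFourier (-m) y = 1 := by
      rw [← mFourier_add, add_neg_cancel, mFourier_zero, ContinuousMap.one_apply]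
    rw [mFourier_add_right, smul_eq_mul, smul_eq_mul]
    linear_combination -(mFourier (-m) x * f (x + y)) * unit
  simp_rw [mFourierCoeff, shift]
  rw [integral_const_mul, integral_add_right_eq_self fun x ↦ mFourier (-m) x • f x]

theorem hasSum_conj_mFourierCoeff_mul {f g : UnitAddTorus ι → ℂ} (hf : MemLp f 2 volume)
    (hg : MemLp g 2 volume) :
    HasSum (fun m ↦ conj (mFourierCoeff f m) * mFourierCoeff g m) (∫ x, conj (f x) * g x) := by
  have coeff {h : UnitAddTorus ι → ℂ} (hh : MemLp h 2 volume) (m : ι → ℤ) :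
      mFourierCoeff (hh.toLp h) m = mFourierCoeff h m :=
    integral_congr_ae (hh.coeFn_toLp.mono fun x hx ↦ by simp only [hx])
  convert hasSum_prod_mFourierCoeff (hf.toLp f) (hg.toLp g) using 1
  · simp only [coeff]
  · refine integral_congr_ae ?_
    filter_upwards [hf.coeFn_toLp, hg.coeFn_toLp] with x hfx hgx
    rw [hfx, hgx]

theorem hasSum_norm_sq_mFourierCoeff_mul_mFourier {f : UnitAddTorus ι → ℂ}
    (hf : MemLp f 2 volume) (y : UnitAddTorus ι) :
    HasSum (fun m ↦ (‖mFourierCoeff f m‖ ^ 2 : ℂ) * mFourier m y)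
      (∫ x, conj (f x) * f (x + y)) := by
  refine (hasSum_conj_mFourierCoeff_mul hf
    (hf.comp_measurePreserving (measurePreserving_add_right volume y))).congr_fun fun m ↦ ?_
  simp only [Function.comp_def, mFourierCoeff_comp_add_right]
  rw [mul_left_comm, Complex.conj_mul', mul_comm]

theorem hasSum_norm_sq_mFourierCoeff {f : UnitAddTorus ι → ℂ} (hf : MemLp f 2 volume) :
    HasSum (fun m ↦ ‖mFourierCoeff f m‖ ^ 2) (∫ x, ‖f x‖ ^ 2) := by
  have h := hasSum_conj_mFourierCoeff_mul hf hf
  simp only [Complex.conj_mul', ← Complex.ofReal_pow, integral_complex_ofReal] at h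
  exact Complex.hasSum_ofReal.1 h

theorem re_mFourier_toUnitAddTorus (m : ι → ℤ) (x : EuclideanSpace ℝ ι) :
    (mFourier m (toUnitAddTorus x)).re = cos ⟪frequency m, x⟫ := by
  have h : mFourier m (toUnitAddTorus x) = Complex.exp (⟪frequency m, x⟫ * Complex.I) := by
    simp only [mFourier, toUnitAddTorus, frequency, ContinuousMap.coe_mk, fourier_coe_apply,
      PiLp.inner_apply, RCLike.inner_apply, conj_trivial, ← Complex.exp_sum, Complex.ofReal_sum,
      Finset.sum_mul]
    congr! 2
    push_cast
    ring
  rw [h, Complex.exp_ofReal_mul_I_re]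

theorem hasSum_norm_sq_mFourierCoeff_mul_Omega [Nonempty ι] {f : UnitAddTorus ι → ℂ}
    (hf : MemLp f 2 volume) {s : ℝ} (hs : 0 ≤ s) :
    HasSum (fun m ↦ ‖mFourierCoeff f m‖ ^ 2 * Omega (Fintype.card ι) (‖frequency m‖ * s))
      (⨍ ξ : Metric.sphere (0 : EuclideanSpace ℝ ι) 1,
        (∫ x, conj (f x) * f (x + toUnitAddTorus (s • (ξ : EuclideanSpace ℝ ι)))).re
        ∂(volume : Measure (EuclideanSpace ℝ ι)).toSphere) := by
  have autocorrelation (ξ : EuclideanSpace ℝ ι) :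
      ∑' m, ‖mFourierCoeff f m‖ ^ 2 * cos ⟪s • frequency m, ξ⟫ =
        (∫ x, conj (f x) * f (x + toUnitAddTorus (s • ξ))).re := by
    rw [← (Complex.hasSum_re (hasSum_norm_sq_mFourierCoeff_mul_mFourier hf _)).tsum_eq]
    refine tsum_congr fun m ↦ ?_
    rw [← Complex.ofReal_pow, Complex.re_ofReal_mul, re_mFourier_toUnitAddTorus,
      real_inner_smul_left, real_inner_smul_right]
  have h := hasSum_mul_Omega (hasSum_norm_sq_mFourierCoeff hf).summable fun m ↦ s • frequency m
  simpa only [autocorrelation, finrank_euclideanSpace, norm_smul, Real.norm_of_nonneg hs,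
    mul_comm s] using h

end TorusFourier

section LinearProgram

/-- The constraints of the linear program behind the density bound: `z₀, z` is feasible in
dimension `n` for the forbidden distances `d`. -/
structure DelsarteFeasible {κ : Type*} [Fintype κ] (n : ℕ) (d : κ → ℝ) (z₀ : ℝ) (z : κ → ℝ) :
    Prop where
  one_le : 1 ≤ z₀ + ∑ k, z k
  nonneg : ∀ t, 0 ≤ t → 0 ≤ z₀ + ∑ k, z k * Omega n (t * d k)

variable {ι κ : Type*} [Fintype ι] [Fintype κ] {d z : κ → ℝ} {z₀ : ℝ}

theorem DelsarteFeasible.mul_left {n : ℕ} (hz : DelsarteFeasible n d z₀ z) {c : ℝ} (hc : 0 ≤ c) :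
    DelsarteFeasible n (fun k ↦ c * d k) z₀ z where
  one_le := hz.one_le
  nonneg t ht := by simpa only [mul_assoc] using hz.nonneg (t * c) (mul_nonneg ht hc)

theorem DelsarteFeasible.norm_sq_integral_le [Nonempty ι]
    (hz : DelsarteFeasible (Fintype.card ι) d z₀ z) (hd : ∀ k, 0 ≤ d k)
    {f : UnitAddTorus ι → ℂ} (hf : MemLp f 2 volume)
    (hfd : ∀ k, ∀ v : EuclideanSpace ℝ ι, ‖v‖ = d k →
      ∫ x, conj (f x) * f (x + toUnitAddTorus v) = 0) :
    ‖∫ x, f x‖ ^ 2 ≤ z₀ * ∫ x, ‖f x‖ ^ 2 := by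
  have sum_Omega (k : κ) : HasSum
      (fun m ↦ ‖mFourierCoeff f m‖ ^ 2 * Omega (Fintype.card ι) (‖frequency m‖ * d k)) 0 := by
    have vanish (ξ : Metric.sphere (0 : EuclideanSpace ℝ ι) 1) :=
      hfd k (d k • ξ) (by simp [norm_smul, abs_of_nonneg (hd k)])
    simpa [vanish] using hasSum_norm_sq_mFourierCoeff_mul_Omega hf (hd k)
  have sum_kernel : HasSum (fun m ↦ ‖mFourierCoeff f m‖ ^ 2 *
      (z₀ + ∑ k, z k * Omega (Fintype.card ι) (‖frequency m‖ * d k))) (z₀ * ∫ x, ‖f x‖ ^ 2) := by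
    have h := ((hasSum_norm_sq_mFourierCoeff hf).mul_left z₀).add
      (hasSum_sum (s := Finset.univ) fun k _ ↦ (sum_Omega k).mul_left (z k))
    simpa [mul_add, Finset.mul_sum, mul_comm, mul_left_comm] using h
  calc
    ‖∫ x, f x‖ ^ 2 ≤ ‖mFourierCoeff f 0‖ ^ 2 * (z₀ + ∑ k, z k) := by
      rw [mFourierCoeff_zero]
      exact le_mul_of_one_le_right (sq_nonneg _) hz.one_le
    _ = ‖mFourierCoeff f 0‖ ^ 2 * (z₀ + ∑ k, z k *
        Omega (Fintype.card ι) (‖frequency (0 : ι → ℤ)‖ * d k)) := by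
      simp [frequency_zero, Omega_zero_right]
    _ ≤ z₀ * ∫ x, ‖f x‖ ^ 2 := le_hasSum sum_kernel 0 fun m _ ↦
      mul_nonneg (sq_nonneg _) (hz.nonneg _ (norm_nonneg _))

theorem DelsarteFeasible.volume_real_sq_le_of_torus [Nonempty ι]
    (hz : DelsarteFeasible (Fintype.card ι) d z₀ z) (hd : ∀ k, 0 ≤ d k)
    {B : Set (UnitAddTorus ι)} (hB : MeasurableSet B)
    (hBd : ∀ k, ∀ v : EuclideanSpace ℝ ι, ‖v‖ = d k → ∀ x ∈ B, x + toUnitAddTorus v ∉ B) :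
    volume.real B ^ 2 ≤ z₀ * volume.real B := by
  have hf : MemLp (B.indicator fun _ ↦ (1 : ℂ)) 2 volume :=
    memLp_indicator_const 2 hB 1 (.inr (measure_ne_top _ _))
  have norm_sq (x : UnitAddTorus ι) :
      ‖B.indicator (fun _ ↦ (1 : ℂ)) x‖ ^ 2 = B.indicator (fun _ ↦ (1 : ℝ)) x := by
    by_cases hx : x ∈ B <;> simp [hx]
  have key := hz.norm_sq_integral_le hd hf fun k v hv ↦ by
    refine integral_eq_zero_of_ae (.of_forall fun x ↦ ?_)
    by_cases hx : x ∈ B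
    · simp [hBd k v hv x hx]
    · simp [hx]
  simpa [norm_sq, integral_indicator hB, measureReal_def] using key

end LinearProgram

section Density

open scoped Pointwise

variable {n : ℕ} {A : Set (EuclideanSpace ℝ (Fin n))} {s : ℝ}

theorem AvoidsDistance.mono (hA : AvoidsDistance A s) {B : Set (EuclideanSpace ℝ (Fin n))}
    (hBA : B ⊆ A) : AvoidsDistance B s :=
  fun x hx y hy ↦ hA x (hBA hx) y (hBA hy)

theorem AvoidsDistance.smul (hA : AvoidsDistance A s) {c : ℝ} (hc : 0 < c) :
    AvoidsDistance (c • A) (c * s) := by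
  rintro _ ⟨x, hx, rfl⟩ _ ⟨y, hy, rfl⟩ h
  rw [dist_smul₀, Real.norm_of_nonneg hc.le] at h
  exact hA x hx y hy (mul_left_cancel₀ hc.ne' h)

theorem AvoidsDistance.add_toUnitAddTorus_notMem_image {r : ℝ} (hA : AvoidsDistance A s)
    (hAr : A ⊆ cube (Fin n) r) (hrs : 2 * r + s < 1) {v : EuclideanSpace ℝ (Fin n)}
    (hv : ‖v‖ = s) : ∀ x ∈ toUnitAddTorus '' A, x + toUnitAddTorus v ∉ toUnitAddTorus '' A := by
  rintro _ ⟨x, hx, rfl⟩ ⟨y, hy, hyx⟩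
  have y_eq : y = x + v := eq_of_toUnitAddTorus_eq hyx fun i ↦ calc
    |y i - (x + v) i| = |y i - x i - v i| := by rw [PiLp.add_apply, sub_sub]
    _ ≤ |y i| + |x i| + |v i| := (abs_sub _ _).trans (by gcongr; exact abs_sub _ _)
    _ ≤ r + r + s := by gcongr; exacts [hAr hy i, hAr hx i, hv ▸ PiLp.norm_apply_le v i]
    _ < 1 := by linarith
  exact hA y hy x hx (by rw [y_eq, dist_self_add_left, hv])

variable {κ : Type*} [Fintype κ] {d z : κ → ℝ} {z₀ : ℝ}

namespace DelsarteFeasible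

theorem volume_real_sq_le_of_subset_cube (hz : DelsarteFeasible n d z₀ z) (hn : 0 < n)
    (hd : ∀ k, 0 ≤ d k) (hA : MeasurableSet A) (havoid : ∀ k, AvoidsDistance A (d k)) {R D : ℝ}
    (hR : 0 ≤ R) (hD : 0 < D) (hdD : ∀ k, d k < D) (hAR : A ⊆ cube (Fin n) R) :
    volume.real A ^ 2 ≤ z₀ * (2 * R + D) ^ n * volume.real A := by
  have : NeZero n := ⟨hn.ne'⟩
  have hL : 0 < 2 * R + D := by positivity
  set c := (2 * R + D)⁻¹ with hc_def
  have hc : 0 < c := inv_pos.2 hL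
  have hcL : c * (2 * R + D) = 1 := inv_mul_cancel₀ hL.ne'
  have hcA : MeasurableSet (c • A) := hA.const_smul₀ c
  have hcAR : c • A ⊆ cube (Fin n) (c * R) := by
    rintro _ ⟨x, hx, rfl⟩ i
    simpa [abs_mul, abs_of_pos hc] using mul_le_mul_of_nonneg_left (hAR hx i) hc.le
  have hcR : 2 * (c * R) < 1 := by nlinarith
  have volume_eq : volume.real (toUnitAddTorus '' (c • A)) = volume.real A / (2 * R + D) ^ n := by
    rw [measureReal_def, volume_toUnitAddTorus_image hcA hcAR hcR, Measure.addHaar_smul]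
    simp [measureReal_def, hc_def, abs_of_pos hL, div_eq_inv_mul, pow_nonneg hL.le]
  have key := ((Fintype.card_fin n).symm ▸ hz.mul_left hc.le).volume_real_sq_le_of_torus
    (fun k ↦ mul_nonneg hc.le (hd k)) (measurableSet_toUnitAddTorus_image hcA hcAR hcR)
    fun k v ↦ ((havoid k).smul hc).add_toUnitAddTorus_notMem_image hcAR (by nlinarith [hdD k])
  rw [volume_eq, div_pow, ← mul_div_assoc, sq (_ ^ n), div_le_iff₀ (by positivity)] at key
  field_simp at key
  linarith

-- Apply the quadratic bound to a ball so small that it avoids every `d k`.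
theorem pos (hz : DelsarteFeasible n d z₀ z) (hn : 0 < n) (hd : ∀ k, 0 < d k) : 0 < z₀ := by
  obtain ⟨ε, hεd, hε⟩ : ∃ ε : ℝ, (∀ k, ε < d k / 2) ∧ 0 < ε :=
    ((eventually_nhdsWithin_of_eventually_nhds (eventually_all.2 fun k ↦
      eventually_lt_nhds (half_pos (hd k)))).and (self_mem_nhdsWithin (s := Set.Ioi 0))).exists
  obtain ⟨D, hD, hdD⟩ : ∃ D : ℝ, 0 < D ∧ ∀ k, d k < D :=
    ((eventually_gt_atTop 0).and (eventually_all.2 fun k ↦ eventually_gt_atTop (d k))).exists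
  set A := Metric.ball (0 : EuclideanSpace ℝ (Fin n)) ε
  have hA : 0 < volume.real A :=
    ENNReal.toReal_pos (Metric.measure_ball_pos _ _ hε).ne' measure_ball_lt_top.ne
  have key := hz.volume_real_sq_le_of_subset_cube hn (fun k ↦ (hd k).le)
    (Metric.isOpen_ball.measurableSet : MeasurableSet A) (fun k x hx y hy h ↦ by
      have := dist_triangle_right x y 0
      rw [Metric.mem_ball] at hx hy
      linarith [hεd k])
    hε.le hD hdD fun x hx i ↦ (PiLp.norm_apply_le x i).trans (mem_ball_zero_iff.1 hx).le
  have hc : 0 < (2 * ε + D) ^ n := by positivity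
  have : 0 < z₀ * (2 * ε + D) ^ n * volume.real A := (sq_pos_of_pos hA).trans_le key
  exact pos_of_mul_pos_left (pos_of_mul_pos_left this hA.le) hc.le

theorem volume_real_le_of_subset_cube (hz : DelsarteFeasible n d z₀ z) (hn : 0 < n)
    (hd : ∀ k, 0 < d k) (hA : MeasurableSet A) (havoid : ∀ k, AvoidsDistance A (d k)) {R D : ℝ}
    (hR : 0 ≤ R) (hD : 0 < D) (hdD : ∀ k, d k < D) (hAR : A ⊆ cube (Fin n) R) :
    volume.real A ≤ z₀ * (2 * R + D) ^ n := by
  rcases (measureReal_nonneg (μ := volume) (s := A)).eq_or_lt with h₀ | h₀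
  · rw [← h₀]
    exact mul_nonneg (hz.pos hn hd).le (by positivity)
  · refine le_of_mul_le_mul_right ?_ h₀
    rw [← sq]
    exact hz.volume_real_sq_le_of_subset_cube hn (fun k ↦ (hd k).le) hA havoid hR hD hdD hAR

end DelsarteFeasible

theorem upperDensity_congr_ae {B : Set (EuclideanSpace ℝ (Fin n))} (h : A =ᵐ[volume] B) :
    upperDensity A = upperDensity B := by
  refine limsup_congr (.of_forall fun T ↦ ?_)
  exact congrArg (fun m ↦ m.toReal / (2 * T) ^ n) (measure_congr (h.inter .rfl))

theorem upperDensity_le_of_tendsto {g : ℝ → ℝ} {c : ℝ} (hg : Tendsto g atTop (𝓝 c))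
    (hAg : ∀ᶠ T in atTop, volume.real (A ∩ cube (Fin n) T) / (2 * T) ^ n ≤ g T) :
    upperDensity A ≤ c := by
  rw [upperDensity, ← hg.limsup_eq]
  refine limsup_le_limsup hAg
    (isCoboundedUnder_le_of_eventually_le (x := 0) _ ?_) hg.isBoundedUnder_le
  filter_upwards [eventually_ge_atTop 0] with T hT
  positivity

theorem tendsto_add_const_div_atTop_nhds_one (c : ℝ) :
    Tendsto (fun t : ℝ ↦ (t + c) / t) atTop (𝓝 1) := by
  have h : Tendsto (fun t : ℝ ↦ 1 + c / t) atTop (𝓝 (1 + 0)) :=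
    (tendsto_const_nhds.div_atTop tendsto_id).const_add 1
  rw [add_zero] at h
  refine h.congr' ?_
  filter_upwards [eventually_ne_atTop 0] with t ht
  rw [add_div, div_self ht]

theorem DelsarteFeasible.upperDensity_le (hz : DelsarteFeasible n d z₀ z) (hn : 0 < n)
    (hd : ∀ k, 0 < d k) (hA : MeasurableSet A) (havoid : ∀ k, AvoidsDistance A (d k)) :
    upperDensity A ≤ z₀ := by
  obtain ⟨D, hD, hdD⟩ : ∃ D : ℝ, 0 < D ∧ ∀ k, d k < D :=
    ((eventually_gt_atTop 0).and (eventually_all.2 fun k ↦ eventually_gt_atTop (d k))).exists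
  have limit : Tendsto (fun T ↦ z₀ * ((2 * T + D) / (2 * T)) ^ n) atTop (𝓝 (z₀ * 1 ^ n)) :=
    (((tendsto_add_const_div_atTop_nhds_one D).comp
      (tendsto_id.const_mul_atTop two_pos)).pow n).const_mul z₀
  rw [one_pow, mul_one] at limit
  refine upperDensity_le_of_tendsto limit ?_
  filter_upwards [eventually_gt_atTop 0] with T hT
  rw [div_pow, ← mul_div_assoc]
  gcongr
  exact hz.volume_real_le_of_subset_cube hn hd (hA.inter (measurableSet_cube T))
    (fun k ↦ (havoid k).mono Set.inter_subset_left) hT.le hD hdD Set.inter_subset_right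

end Density

theorem main_theorem_general {κ : Type*} [Fintype κ] {n : ℕ} (hn : 1 ≤ n) {d : κ → ℝ}
    (hd : ∀ k, 0 < d k) {A : Set (EuclideanSpace ℝ (Fin n))} (hA : NullMeasurableSet A volume)
    (havoid : ∀ k, AvoidsDistance A (d k)) {z₀ : ℝ} {z : κ → ℝ} (hsum : 1 ≤ z₀ + ∑ k, z k)
    (hpos : ∀ t : ℝ, 0 ≤ t → 0 ≤ z₀ + ∑ k, z k * Omega n (t * d k)) :
    upperDensity A ≤ z₀ := by
  obtain ⟨B, hBA, hB, hBA_ae⟩ := hA.exists_measurable_subset_ae_eq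
  rw [← upperDensity_congr_ae hBA_ae]
  exact DelsarteFeasible.upperDensity_le ⟨hsum, hpos⟩ hn hd hB fun k ↦ (havoid k).mono hBA

theorem main_theorem (n N : ℕ) (hn : 1 ≤ n) (d : Fin N → ℝ) (hd : ∀ k, 0 < d k)
    (A : Set (EuclideanSpace ℝ (Fin n))) (hA : MeasurableSet A)
    (havoid : ∀ k, AvoidsDistance A (d k))
    (z₀ : ℝ) (z : Fin N → ℝ)
    (hsum : z₀ + ∑ k, z k ≥ 1)
    (hpos : ∀ t : ℝ, 0 ≤ t → z₀ + ∑ k, z k * Omega n (t * d k) ≥ 0) :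
    upperDensity A ≤ z₀ := by
  exact main_theorem_general hn hd hA.nullMeasurableSet havoid hsum hpos
end
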